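/- Fix n ≥ 1, extended reals α_1,…,α_{n−1} ∈ ℝ ∪ {−∞,+∞}, and β ∈ [0,1], and define the mechanism π on profiles D = (D_1,…,D_n) of nonempty finite multisets of reals by π(D) = med(y_1*,…,y_n*,α_1,…,α_{n−1}), the n-th smallest of these 2n−1 extended-real values (always a real number), where y_i* = β·y_i^0 + (1−β)·y_i^1 and [y_i^0, y_i^1] = med(D_i). Then π is group strategyproof w.r.t. manipulation, replication, and hiding: there is no nonempty coalition S of agents, profile D, and family of nonempty finite multisets (D_j′)_{j∈S} such that l(π(D_S′, D_{−S}), D_j) < l(π(D), D_j) for every j ∈ S. -/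

import Mathlib

/-- The loss of a finite multiset `S` of reals at a point `x`:
`l(x,S) = \sum_{y \in S} |x - y|` (with multiplicity). -/
noncomputable def loss (x : ℝ) (S : Multiset ℝ) : ℝ :=
  (S.map fun y => |x - y|).sum

/-- Left endpoint `t_{⌈k/2⌉}` of the median interval of a (nonempty) multiset of reals. -/
noncomputable def medLo (S : Multiset ℝ) : ℝ :=
  (S.sort (· ≤ ·)).getD ((S.card - 1) / 2) 0

/-- Right endpoint `t_{⌊k/2⌋+1}` of the median interval of a (nonempty) multiset of reals. -/
noncomputable def medHi (S : Multiset ℝ) : ℝ :=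
  (S.sort (· ≤ ·)).getD (S.card / 2) 0

/-- The `k`-th smallest element of a multiset of extended reals. -/
noncomputable def nthSmallest (M : Multiset EReal) (k : ℕ) : EReal :=
  (M.sort (· ≤ ·)).getD (k - 1) 0

/-- The generalized-median value `med(y_1*, …, y_n*, α_1, …, α_{n-1})`: the `n`-th
smallest of these `2n-1` extended reals, where `y_i* = β·y_i^0 + (1-β)·y_i^1`
and `[y_i^0, y_i^1] = med(D_i)`. -/
noncomputable def medMech (n : ℕ) (α : Fin (n - 1) → EReal) (β : ℝ)
    (D : Fin n → Multiset ℝ) : EReal :=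
  nthSmallest
    ((Finset.univ.val.map fun i : Fin n =>
        ((β * medLo (D i) + (1 - β) * medHi (D i) : ℝ) : EReal)) +
      Finset.univ.val.map α) n

/-- Group strategyproofness w.r.t. manipulation, replication and hiding: no nonempty
coalition can deviate (each member replacing her report by an arbitrary nonempty finite
multiset) so that every member strictly decreases her loss. -/
def GroupStrategyproof (n : ℕ) (π : (Fin n → Multiset ℝ) → ℝ) : Prop :=
  ¬ ∃ (S : Finset (Fin n)) (D D' : Fin n → Multiset ℝ),
      S.Nonempty ∧ (∀ j, D j ≠ 0) ∧ (∀ j ∈ S, D' j ≠ 0) ∧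
      ∀ j ∈ S, loss (π fun k => if k ∈ S then D' k else D k) (D j) < loss (π D) (D j)

lemma sorted_getD_iff {T : Type*} [LinearOrder T] (P : T → Prop) [DecidablePred P]
    (hP : ∀ a b, a ≤ b → P b → P a) (d : T) (l : List T) (hl : l.Pairwise (· ≤ ·)) :
    ∀ k, k < l.length → (P (l.getD k d) ↔ k < l.countP (fun a => decide (P a))) := by
  induction l with
  | nil => intro k hk; simp at hk
  | cons a t ih =>
    rw [List.pairwise_cons] at hl
    intro k hk
    have hz : ¬ P a → t.countP (fun a => decide (P a)) = 0 := by
      intro h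
      rw [List.countP_eq_zero]
      intro b hb
      simpa using fun hb' => h (hP a b (hl.1 b hb) hb')
    rw [List.countP_cons]
    cases k with
    | zero =>
      by_cases h : P a
      · simp [h]
      · simp [h, hz h]
    | succ k =>
      have := ih hl.2 k (by simpa using hk)
      rw [List.getD_cons_succ, this]
      by_cases h : P a
      · simp [h]
      · simp [h, hz h]

lemma sort_getD_iff {T : Type*} [LinearOrder T] (P : T → Prop) [DecidablePred P]
    (hP : ∀ a b, a ≤ b → P b → P a) (d : T) (M : Multiset T) (k : ℕ) (hk : k < M.card) :
    P ((M.sort (· ≤ ·)).getD k d) ↔ k < M.countP P := by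
  rw [sorted_getD_iff P hP d _ (Multiset.pairwise_sort M (· ≤ ·)) k (by simpa using hk)]
  conv_rhs => rw [← Multiset.sort_eq M (· ≤ ·), Multiset.coe_countP]

lemma loss_right (p q : ℝ) (h : p ≤ q) (S : Multiset ℝ) :
    (q - p) * (2 * (S.countP (fun a => a ≤ p) : ℝ) - S.card) ≤ loss q S - loss p S := by
  unfold loss
  induction S using Multiset.induction_on with
  | empty => simp
  | cons a s ih =>
    simp only [Multiset.map_cons, Multiset.sum_cons, Multiset.card_cons, Multiset.countP_cons]
    split_ifs with ha
    · push_cast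
      rw [abs_of_nonneg (by linarith : 0 ≤ q - a), abs_of_nonneg (by linarith : 0 ≤ p - a)]
      linarith
    · push_cast
      have := abs_sub_abs_le_abs_sub (p - a) (q - a)
      rw [show p - a - (q - a) = -(q - p) by ring, abs_neg, abs_of_nonneg (by linarith : 0 ≤ q - p)] at this
      linarith

lemma loss_left (p q : ℝ) (h : q ≤ p) (S : Multiset ℝ) :
    (p - q) * (S.card - 2 * (S.countP (fun a => a < p) : ℝ)) ≤ loss q S - loss p S := by
  unfold loss
  induction S using Multiset.induction_on with
  | empty => simp
  | cons a s ih =>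
    simp only [Multiset.map_cons, Multiset.sum_cons, Multiset.card_cons, Multiset.countP_cons]
    split_ifs with ha
    · push_cast
      have := abs_sub_abs_le_abs_sub (p - a) (q - a)
      rw [show p - a - (q - a) = (p - q) by ring, abs_of_nonneg (by linarith : 0 ≤ p - q)] at this
      linarith
    · push_cast
      rw [abs_of_nonpos (by linarith : q - a ≤ 0), abs_of_nonpos (by linarith : p - a ≤ 0)]
      linarith

lemma medLo_le_medHi (S : Multiset ℝ) (hS : S ≠ 0) : medLo S ≤ medHi S := by
  have hc : 0 < S.card := Multiset.card_pos.2 hS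
  have h1 := sort_getD_iff (fun a => a ≤ medHi S) (fun a b h h' => h.trans h') 0 S (S.card / 2)
    (by omega)
  have h2 := sort_getD_iff (fun a => a ≤ medHi S) (fun a b h h' => h.trans h') 0 S
    ((S.card - 1) / 2) (by omega)
  have h3 := h1.1 le_rfl
  exact h2.2 (by omega)

lemma loss_le_right (p q : ℝ) (h : p ≤ q) (S : Multiset ℝ) (hS : S ≠ 0) (hp : medLo S ≤ p) :
    loss p S ≤ loss q S := by
  have hc : 0 < S.card := Multiset.card_pos.2 hS
  have h2 := (sort_getD_iff (fun a => a ≤ p) (fun a b h h' => h.trans h') 0 S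
    ((S.card - 1) / 2) (by omega)).1 hp
  have h3 : S.card ≤ 2 * S.countP (fun a => a ≤ p) := by omega
  have h4 : (S.card : ℝ) ≤ 2 * (S.countP (fun a => a ≤ p) : ℝ) := by exact_mod_cast h3
  have := loss_right p q h S
  have := mul_nonneg (sub_nonneg.2 h) (sub_nonneg.2 h4)
  linarith

lemma loss_le_left (p q : ℝ) (h : q ≤ p) (S : Multiset ℝ) (hS : S ≠ 0) (hp : p ≤ medHi S) :
    loss p S ≤ loss q S := by
  have hc : 0 < S.card := Multiset.card_pos.2 hS
  have h2 := mt (sort_getD_iff (fun a => a < p) (fun a b h h' => h.trans_lt h') 0 S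
    (S.card / 2) (by omega)).2 (not_lt.2 hp)
  have h3 : 2 * S.countP (fun a => a < p) ≤ S.card := by omega
  have h4 : 2 * (S.countP (fun a => a < p) : ℝ) ≤ (S.card : ℝ) := by exact_mod_cast h3
  have := loss_left p q h S
  have := mul_nonneg (sub_nonneg.2 h) (sub_nonneg.2 h4)
  linarith

lemma nthSmallest_mono (n : ℕ) (hn : 1 ≤ n) (α : Fin (n - 1) → EReal) (y z : Fin n → EReal)
    (P : EReal → Prop) (hP : ∀ a b, a ≤ b → P b → P a) (h : ∀ i, P (y i) → P (z i))
    (hy : P (nthSmallest (Finset.univ.val.map y + Finset.univ.val.map α) n)) :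
    P (nthSmallest (Finset.univ.val.map z + Finset.univ.val.map α) n) := by
  classical
  unfold nthSmallest at *
  rw [sort_getD_iff P hP 0 _ _ (by simp; omega)] at hy ⊢
  refine hy.trans_le ?_
  simp only [Multiset.countP_add, Multiset.countP_map]
  gcongr ?_ + _
  exact Multiset.card_le_card (Multiset.monotone_filter_right _ h)

theorem stmt_9 (n : ℕ) (hn : 1 ≤ n) (α : Fin (n - 1) → EReal) (β : ℝ)
    (hβ : β ∈ Set.Icc (0 : ℝ) 1) (π : (Fin n → Multiset ℝ) → ℝ)
    (hπ : ∀ D : Fin n → Multiset ℝ, (∀ j, D j ≠ 0) →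
      (π D : EReal) = medMech n α β D) :
    GroupStrategyproof n π := by
  rintro ⟨S, D, D', ⟨j₀, hj₀⟩, hD, hD', hlt⟩
  obtain ⟨hβ0, hβ1⟩ := hβ
  set E : Fin n → Multiset ℝ := fun k => if k ∈ S then D' k else D k with hE
  have hE0 : ∀ j, E j ≠ 0 := by
    intro j
    by_cases hj : j ∈ S
    · simpa [hE, hj] using hD' j hj
    · simpa [hE, hj] using hD j
  have hp := hπ D hD
  have hq := hπ E hE0
  unfold medMech at hp hq
  rcases lt_trichotomy (π D) (π E) with h | h | h
  · have hy : ∀ j ∈ S, π D < β * medLo (D j) + (1 - β) * medHi (D j) := by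
      intro j hj
      by_contra! hc
      have := medLo_le_medHi (D j) (hD j)
      have := loss_le_right (π D) (π E) h.le (D j) (hD j) (by nlinarith)
      linarith [hlt j hj]
    have := nthSmallest_mono n hn α
      (fun i => ((β * medLo (D i) + (1 - β) * medHi (D i) : ℝ) : EReal))
      (fun i => ((β * medLo (E i) + (1 - β) * medHi (E i) : ℝ) : EReal))
      (fun a => a ≤ (π D : EReal)) (fun a b h h' => h.trans h') (by
        intro i hi
        by_cases hj : i ∈ S
        · exact absurd (EReal.coe_le_coe_iff.1 hi) (not_le.2 (hy i hj))
        · simpa only [hE, hj, if_false] using hi) hp.ge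
    rw [← hq, EReal.coe_le_coe_iff] at this
    linarith
  · have := hlt j₀ hj₀
    rw [h] at this
    exact lt_irrefl _ this
  · have hy : ∀ j ∈ S, β * medLo (D j) + (1 - β) * medHi (D j) < π D := by
      intro j hj
      by_contra! hc
      have := medLo_le_medHi (D j) (hD j)
      have := loss_le_left (π D) (π E) h.le (D j) (hD j) (by nlinarith)
      linarith [hlt j hj]
    have := nthSmallest_mono n hn α
      (fun i => ((β * medLo (E i) + (1 - β) * medHi (E i) : ℝ) : EReal))
      (fun i => ((β * medLo (D i) + (1 - β) * medHi (D i) : ℝ) : EReal))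
      (fun a => a < (π D : EReal)) (fun a b h h' => h.trans_lt h') (by
        intro i hi
        by_cases hj : i ∈ S
        · exact EReal.coe_lt_coe_iff.2 (hy i hj)
        · simpa only [hE, hj, if_false] using hi) (by
        rw [← hq]; exact EReal.coe_lt_coe_iff.2 h)
    rw [← hp] at this
    exact lt_irrefl _ this
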